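/- Every graph in the class C5-minimal with at least 6 vertices is 2-connected, where C5-minimal consists of internally 5-edge-connected K_{3,3}-immersion-free graphs G that are not 3-regular planar and have the fewest edges among all weakly 5-edge-connected non-3-regular-planar K_{3,3}-immersion-free graphs on |V(G)| vertices. -/

import Mathlib

/-- A finite multigraph without loops: vertices `V`, edges `E`,
each edge has an unordered pair of distinct endpoints. -/
structure Multigraph where
  V : Type
  E : Type
  [fV : Fintype V]
  [fE : Fintype E]
  [dV : DecidableEq V]
  [dE : DecidableEq E]
  ends : E → Sym2 V
  noLoop : ∀ e, ¬ (ends e).IsDiag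

attribute [instance] Multigraph.fV Multigraph.fE Multigraph.dV Multigraph.dE

namespace Multigraph

/-- Walks in a multigraph. -/
inductive Walk (G : Multigraph) : G.V → G.V → Type
  | nil (v : G.V) : Walk G v v
  | cons {u v w : G.V} (e : G.E) (h : G.ends e = s(u, v)) (p : Walk G v w) : Walk G u w

/-- The list of edges traversed by a walk. -/
def Walk.edges {G : Multigraph} : {u v : G.V} → G.Walk u v → List G.E
  | _, _, .nil _ => []
  | _, _, .cons e _ p => e :: p.edges

/-- The list of vertices visited by a walk. -/
def Walk.support {G : Multigraph} : {u v : G.V} → G.Walk u v → List G.V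
  | u, _, .nil _ => [u]
  | u, _, .cons _ _ p => u :: p.support

/-- A walk is a path if it visits no vertex twice. -/
def Walk.IsPath {G : Multigraph} {u v : G.V} (p : G.Walk u v) : Prop := p.support.Nodup

/-- Data of an immersion of `H` into `G`: an injective map on vertices and,
for each edge of `H`, a path in `G` joining the images of its endpoints,
the paths being pairwise edge-disjoint. -/
structure ImmersionData (H G : Multigraph) where
  vmap : H.V → G.V
  inj : Function.Injective vmap
  pstart : H.E → G.V
  pend : H.E → G.V
  walk : ∀ e, G.Walk (pstart e) (pend e)
  ends_eq : ∀ e, s(pstart e, pend e) = (H.ends e).map vmap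
  isPath : ∀ e, (walk e).IsPath
  edgeDisj : ∀ e e', e ≠ e' → List.Disjoint (walk e).edges (walk e').edges

/-- `H` immerses in `G`. -/
def Immerses (H G : Multigraph) : Prop := Nonempty (ImmersionData H G)

/-- Data witnessing that `G` contains a subdivision of `H` as a subgraph
(i.e. `H` is a topological minor of `G`): as an immersion, but moreover the
paths may only meet at images of common endpoints. -/
structure SubdivisionData (H G : Multigraph) extends ImmersionData H G where
  vtxDisj : ∀ e e', e ≠ e' → ∀ x, x ∈ (walk e).support → x ∈ (walk e').support →
    ∃ w, x = vmap w ∧ w ∈ H.ends e ∧ w ∈ H.ends e'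

/-- `G` contains a subdivision of `H` as a subgraph. -/
def ContainsSubdivision (H G : Multigraph) : Prop := Nonempty (SubdivisionData H G)

/-- The complete bipartite graph `K_{3,3}`. -/
def K33 : Multigraph where
  V := Fin 3 ⊕ Fin 3
  E := Fin 3 × Fin 3
  ends e := s(Sum.inl e.1, Sum.inr e.2)
  noLoop e := by simp [Sym2.mk_isDiag_iff]

/-- The complete graph `K_5`. -/
def K5 : Multigraph where
  V := Fin 5
  E := {p : Fin 5 × Fin 5 // p.1 < p.2}
  ends e := s(e.1.1, e.1.2)
  noLoop e := by simpa [Sym2.mk_isDiag_iff] using e.2.ne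

variable (G : Multigraph)

/-- The degree of a vertex: the number of incident edges. -/
def deg (v : G.V) : ℕ := (Finset.univ.filter fun e => v ∈ G.ends e).card

/-- The multiplicity of the (possible) edge between `u` and `v`. -/
def mult (u v : G.V) : ℕ := (Finset.univ.filter fun e => G.ends e = s(u, v)).card

/-- The edge cut determined by a set `A` of vertices. -/
def cut (A : Finset G.V) : Finset G.E :=
  Finset.univ.filter fun e => ∃ u ∈ A, ∃ v ∈ Aᶜ, G.ends e = s(u, v)

/-- Every edge cut of `G` has at least `k` edges. -/
def EdgeConnGe (k : ℕ) : Prop :=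
  ∀ A : Finset G.V, A.Nonempty → A ≠ Finset.univ → k ≤ (G.cut A).card

/-- Internally 4-edge-connected: 3-edge-connected and every 3-edge cut has a
side consisting of a single vertex. -/
def Internally4EC : Prop :=
  G.EdgeConnGe 3 ∧ ∀ A : Finset G.V, A.Nonempty → A ≠ Finset.univ →
    (G.cut A).card = 3 → A.card = 1 ∨ Aᶜ.card = 1

/-- Weakly 5-edge-connected: internally 4-edge-connected and every 4-edge cut
has a side with at most two vertices. -/
def Weakly5EC : Prop :=
  G.Internally4EC ∧ ∀ A : Finset G.V, A.Nonempty → A ≠ Finset.univ →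
    (G.cut A).card = 4 → A.card ≤ 2 ∨ Aᶜ.card ≤ 2

/-- `G` is `d`-regular. -/
def IsRegular (d : ℕ) : Prop := ∀ v, G.deg v = d

/-- `G` is connected. -/
def Connected : Prop := ∀ u v : G.V, Nonempty (G.Walk u v)

/-- `v` is a cut-vertex: the remaining vertices split into two nonempty parts
with no edge between them. -/
def IsCutVertex (v : G.V) : Prop :=
  ∃ C D : Finset G.V, C.Nonempty ∧ D.Nonempty ∧ Disjoint C D ∧ v ∉ C ∧ v ∉ D ∧
    (∀ x : G.V, x ∈ C ∪ D ∨ x = v) ∧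
    ∀ e : G.E, ¬ ∃ u ∈ C, ∃ w ∈ D, G.ends e = s(u, w)

/-- `G` is 2-connected. -/
def TwoConnected : Prop :=
  G.Connected ∧ 3 ≤ Fintype.card G.V ∧ ∀ v, ¬ G.IsCutVertex v

/-- Planarity, via Kuratowski's characterization: no subdivision of `K_5`
nor of `K_{3,3}` as a subgraph. -/
def Planar : Prop := ¬ ContainsSubdivision K5 G ∧ ¬ ContainsSubdivision K33 G

end Multigraph

/-!
Suppose `v` is a cut-vertex separating `C` from `D`. Choose edges `e = cv` and `f = dv` with `c ∈ C`
and `d ∈ D`, and split them off: replace both by a single edge `cd`. The new graph immerses in the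
old one, so it creates no new immersions, and it has one edge less. Cuts can only drop in size for
sets `A ∌ v` containing both `c` and `d`, and then by exactly two; but such a cut is the disjoint
union of the cuts of `A ∩ C` and `A ∩ D`, so it had at least `3 + 3` edges, and exactly six only if
`A = {c, d}`. Hence weak 5-edge-connectivity survives, and `A = {v}ᶜ` shows that `v` keeps degree
at least four. This contradicts the minimality of the number of edges.
-/

namespace Multigraph

section Walks

variable {G : Multigraph}

/-- Concatenation of walks. -/
def Walk.append {u v w : G.V} : G.Walk u v → G.Walk v w → G.Walk u w
  | .nil _, q => q
  | .cons e h p, q => .cons e h (p.append q)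

/-- The walk traversed backwards. -/
def Walk.reverse {u v : G.V} : G.Walk u v → G.Walk v u
  | .nil v => .nil v
  | .cons e h p => p.reverse.append (.cons e (h.trans Sym2.eq_swap) (.nil _))

variable {u v w x : G.V}

theorem Walk.edges_append (p : G.Walk u v) (q : G.Walk v w) :
    (p.append q).edges = p.edges ++ q.edges := by
  induction p with
  | nil => rfl
  | cons e h p ih => simp only [append, edges, ih, List.cons_append]

theorem Walk.edges_reverse (p : G.Walk u v) : p.reverse.edges = p.edges.reverse := by
  induction p with
  | nil => rfl
  | cons e h p ih => simp only [reverse, edges_append, edges, ih, List.reverse_cons]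

theorem Walk.isPath_cons_iff {e : G.E} {h : G.ends e = s(u, v)} {p : G.Walk v w} :
    (cons e h p).IsPath ↔ u ∉ p.support ∧ p.IsPath :=
  List.nodup_cons

theorem Walk.IsPath.exists_isPath_of_mem_support {p : G.Walk u w} (hp : p.IsPath)
    (hx : x ∈ p.support) : ∃ q : G.Walk x w, q.IsPath ∧ q.edges ⊆ p.edges := by
  induction p with
  | nil v =>
    obtain rfl : x = v := List.mem_singleton.1 hx
    exact ⟨nil x, hp, List.Subset.refl _⟩
  | cons e h p ih =>
    obtain rfl | hx := List.mem_cons.1 hx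
    · exact ⟨cons e h p, hp, List.Subset.refl _⟩
    · obtain ⟨q, hq, hqp⟩ := ih (isPath_cons_iff.1 hp).2 hx
      exact ⟨q, hq, List.subset_cons_of_subset e hqp⟩

theorem Walk.exists_isPath_edges_subset (p : G.Walk u w) :
    ∃ q : G.Walk u w, q.IsPath ∧ q.edges ⊆ p.edges := by
  induction p with
  | nil v => exact ⟨nil v, List.nodup_singleton v, List.Subset.refl _⟩
  | @cons u _ _ e h p ih =>
    obtain ⟨q, hq, hqp⟩ := ih
    by_cases hu : u ∈ q.support
    · obtain ⟨r, hr, hrq⟩ := hq.exists_isPath_of_mem_support hu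
      exact ⟨r, hr, List.subset_cons_of_subset e (List.Subset.trans hrq hqp)⟩
    · exact ⟨cons e h q, isPath_cons_iff.2 ⟨hu, hq⟩, List.cons_subset_cons e hqp⟩

end Walks

section Immersions

variable {H K G : Multigraph}

theorem exists_ends_eq (G : Multigraph) (e : G.E) : ∃ u v, G.ends e = s(u, v) := by
  induction h : G.ends e with
  | _ u v => exact ⟨u, v, rfl⟩

theorem immerses_of_walks (φ : H.V → G.V) (hφ : φ.Injective) (T : H.E → List G.E)
    (hT : ∀ e e', e ≠ e' → (T e).Disjoint (T e'))
    (hwalk : ∀ e, ∃ u v, H.ends e = s(u, v) ∧ ∃ p : G.Walk (φ u) (φ v), p.edges ⊆ T e) :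
    Immerses H G := by
  choose a b hab p hp using hwalk
  choose q hq hqp using fun e => (p e).exists_isPath_edges_subset
  refine ⟨⟨φ, hφ, φ ∘ a, φ ∘ b, q, fun e => ?_, hq, fun e e' hne => ?_⟩⟩
  · rw [hab, Sym2.map_mk]
    rfl
  · have hqT (e) : (q e).edges ⊆ T e := List.Subset.trans (hqp e) (hp e)
    exact List.disjoint_of_subset_left (hqT e)
      (List.disjoint_of_subset_right (hqT e') (hT e e' hne))

theorem ImmersionData.exists_walk_of_ends_eq (I : ImmersionData H G) {e : H.E} {u v : H.V}
    (h : H.ends e = s(u, v)) :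
    ∃ p : G.Walk (I.vmap u) (I.vmap v), p.edges ⊆ (I.walk e).edges := by
  have hends : s(I.pstart e, I.pend e) = s(I.vmap u, I.vmap v) := by
    rw [I.ends_eq, h, Sym2.map_mk]
  obtain ⟨hu, hv⟩ | ⟨hv, hu⟩ := Sym2.eq_iff.1 hends
  · exact hu ▸ hv ▸ ⟨I.walk e, List.Subset.refl _⟩
  · exact hu ▸ hv ▸ ⟨(I.walk e).reverse, (Walk.edges_reverse _).symm ▸ List.reverse_subset.2
      (List.Subset.refl _)⟩

theorem ImmersionData.exists_walk_map (I : ImmersionData H G) {u v : H.V} (p : H.Walk u v) :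
    ∃ q : G.Walk (I.vmap u) (I.vmap v), q.edges ⊆ p.edges.flatMap fun e => (I.walk e).edges := by
  induction p with
  | nil v => exact ⟨.nil _, List.nil_subset _⟩
  | cons e h p ih =>
    obtain ⟨q, hq⟩ := ih
    obtain ⟨r, hr⟩ := I.exists_walk_of_ends_eq h
    refine ⟨r.append q, ?_⟩
    rw [Walk.edges_append, Walk.edges, List.flatMap_cons]
    exact List.append_subset.2 ⟨List.subset_append_of_subset_left _ hr,
      List.subset_append_of_subset_right _ hq⟩

theorem Immerses.trans (hHK : Immerses H K) (hKG : Immerses K G) : Immerses H G := by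
  obtain ⟨I⟩ := hHK
  obtain ⟨J⟩ := hKG
  refine immerses_of_walks (J.vmap ∘ I.vmap) (J.inj.comp I.inj)
    (fun e => (I.walk e).edges.flatMap fun y => (J.walk y).edges) ?_ ?_
  · intro e e' hne x hx hx'
    obtain ⟨y, hy, hxy⟩ := List.mem_flatMap.1 hx
    obtain ⟨y', hy', hxy'⟩ := List.mem_flatMap.1 hx'
    obtain rfl | hyy' := eq_or_ne y y'
    · exact I.edgeDisj e e' hne hy hy'
    · exact J.edgeDisj y y' hyy' hxy hxy'
  · intro e
    obtain ⟨u, v, huv⟩ := H.exists_ends_eq e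
    obtain ⟨p, hp⟩ := I.exists_walk_of_ends_eq huv
    obtain ⟨q, hq⟩ := J.exists_walk_map p
    refine ⟨u, v, huv, q, fun x hx => ?_⟩
    obtain ⟨y, hy, hxy⟩ := List.mem_flatMap.1 (hq hx)
    exact List.mem_flatMap.2 ⟨y, hp hy, hxy⟩

end Immersions

section Cuts

variable {G : Multigraph} {A B : Finset G.V}

theorem mem_cut_iff {e : G.E} {u v : G.V} (h : G.ends e = s(u, v)) :
    e ∈ G.cut A ↔ (u ∈ A ↔ v ∉ A) := by
  simp only [cut, Finset.mem_filter, Finset.mem_univ, true_and, h, Finset.mem_compl]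
  constructor
  · rintro ⟨a, ha, b, hb, hab⟩
    obtain ⟨rfl, rfl⟩ | ⟨rfl, rfl⟩ := Sym2.eq_iff.1 hab <;> tauto
  · intro huv
    by_cases hu : u ∈ A
    · exact ⟨u, hu, v, huv.1 hu, rfl⟩
    · exact ⟨v, by tauto, u, hu, Sym2.eq_swap⟩

theorem exists_ends_eq_of_mem_cut {e : G.E} (he : e ∈ G.cut A) :
    ∃ u ∈ A, ∃ v ∉ A, G.ends e = s(u, v) := by
  simpa only [cut, Finset.mem_filter, Finset.mem_univ, true_and, Finset.mem_compl] using he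

theorem cut_compl (A : Finset G.V) : G.cut Aᶜ = G.cut A := by
  ext e
  obtain ⟨u, v, h⟩ := G.exists_ends_eq e
  rw [mem_cut_iff h, mem_cut_iff h, Finset.mem_compl, Finset.mem_compl]
  tauto

theorem card_cut_singleton (v : G.V) : (G.cut {v}).card = G.deg v := by
  rw [deg]
  congr 1
  ext e
  obtain ⟨a, b, h⟩ := G.exists_ends_eq e
  have hab : a ≠ b := fun hab => G.noLoop e (h ▸ Sym2.mk_isDiag_iff.2 hab)
  simp only [mem_cut_iff h, Finset.mem_filter, Finset.mem_univ, true_and, h, Finset.mem_singleton,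
    Sym2.mem_iff, eq_comm (a := v)]
  grind

theorem card_cut_union (hAB : Disjoint A B)
    (hno : ∀ e : G.E, ¬ ∃ u ∈ A, ∃ w ∈ B, G.ends e = s(u, w)) :
    (G.cut (A ∪ B)).card = (G.cut A).card + (G.cut B).card := by
  have hmem : ∀ e, (e ∈ G.cut (A ∪ B) ↔ e ∈ G.cut A ∨ e ∈ G.cut B) ∧
      (e ∈ G.cut A → e ∉ G.cut B) := by
    intro e
    obtain ⟨u, v, h⟩ := G.exists_ends_eq e
    have huv : ¬ (u ∈ A ∧ v ∈ B) := fun ⟨hu, hv⟩ => hno e ⟨u, hu, v, hv, h⟩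
    have hvu : ¬ (v ∈ A ∧ u ∈ B) := fun ⟨hv, hu⟩ => hno e ⟨v, hv, u, hu, h.trans Sym2.eq_swap⟩
    have hu : u ∈ A → u ∉ B := fun h => Finset.disjoint_left.1 hAB h
    have hv : v ∈ A → v ∉ B := fun h => Finset.disjoint_left.1 hAB h
    simp only [mem_cut_iff h, Finset.mem_union]
    tauto
  have hunion : G.cut (A ∪ B) = G.cut A ∪ G.cut B := by
    ext e
    rw [(hmem e).1, Finset.mem_union]
  rw [hunion, Finset.card_union_of_disjoint (Finset.disjoint_left.2 fun e => (hmem e).2)]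

end Cuts

section EdgeConnectivity

variable {G : Multigraph} {A : Finset G.V} {v : G.V}

theorem EdgeConnGe.mono {j k : ℕ} (hjk : j ≤ k) (h : G.EdgeConnGe k) : G.EdgeConnGe j :=
  fun A hA hA' => hjk.trans (h A hA hA')

theorem EdgeConnGe.le_card_cut_of_notMem {k : ℕ} (h : G.EdgeConnGe k) (hA : A.Nonempty)
    (hv : v ∉ A) : k ≤ (G.cut A).card :=
  h A hA fun hA' => hv (hA' ▸ Finset.mem_univ v)

theorem EdgeConnGe.connected (h : G.EdgeConnGe 1) : G.Connected := by
  classical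
  intro u t
  by_contra hu
  let A : Finset G.V := Finset.univ.filter fun w => Nonempty (G.Walk w t)
  have hmem : ∀ w, w ∈ A ↔ Nonempty (G.Walk w t) := by
    simp only [A, Finset.mem_filter, Finset.mem_univ, true_and, implies_true]
  have hcut : 1 ≤ (G.cut A).card :=
    h.le_card_cut_of_notMem ⟨t, (hmem t).2 ⟨.nil t⟩⟩ (mt (hmem u).1 hu)
  obtain ⟨e, he⟩ := Finset.card_pos.1 hcut
  obtain ⟨a, ha, b, hb, hab⟩ := exists_ends_eq_of_mem_cut he
  obtain ⟨p⟩ := (hmem a).1 ha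
  exact hb ((hmem b).2 ⟨.cons e (hab.trans Sym2.eq_swap) p⟩)

theorem weakly5EC_of_forall_notMem (v : G.V)
    (h : ∀ A : Finset G.V, A.Nonempty → v ∉ A → 3 ≤ (G.cut A).card ∧
      ((G.cut A).card = 3 → A.card = 1 ∨ Aᶜ.card = 1) ∧
      ((G.cut A).card = 4 → A.card ≤ 2 ∨ Aᶜ.card ≤ 2)) : G.Weakly5EC := by
  have hall : ∀ A : Finset G.V, A.Nonempty → A ≠ Finset.univ → 3 ≤ (G.cut A).card ∧
      ((G.cut A).card = 3 → A.card = 1 ∨ Aᶜ.card = 1) ∧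
      ((G.cut A).card = 4 → A.card ≤ 2 ∨ Aᶜ.card ≤ 2) := by
    intro A hA hA'
    by_cases hv : v ∈ A
    · have hAc := h Aᶜ (Finset.nonempty_iff_ne_empty.2 (mt (Finset.compl_eq_empty_iff A).1 hA'))
        (Finset.notMem_compl.2 hv)
      rw [cut_compl, compl_compl] at hAc
      exact ⟨hAc.1, fun h3 => (hAc.2.1 h3).symm, fun h4 => (hAc.2.2 h4).symm⟩
    · exact h A hA hv
  exact ⟨⟨fun A hA hA' => (hall A hA hA').1, fun A hA hA' => (hall A hA hA').2.1⟩,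
    fun A hA hA' => (hall A hA hA').2.2⟩

theorem Internally4EC.card_eq_one {x y : G.V} (h : G.Internally4EC) (hA : A.Nonempty)
    (hxy : x ≠ y) (hx : x ∉ A) (hy : y ∉ A) (hcut : (G.cut A).card = 3) : A.card = 1 := by
  refine (h.2 A hA (fun hA' => hx (hA' ▸ Finset.mem_univ x)) hcut).resolve_right fun hAc => ?_
  exact hxy (Finset.card_le_one.1 hAc.le x (Finset.mem_compl.2 hx) y (Finset.mem_compl.2 hy))

end EdgeConnectivity

section Separations

/-- `C` and `D` are the two sides of a separation of `G` at the vertex `v`, that is, witnesses of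
`G.IsCutVertex v`; the sides do not contain `v`. -/
structure IsSeparation (G : Multigraph) (v : G.V) (C D : Finset G.V) : Prop where
  left_nonempty : C.Nonempty
  right_nonempty : D.Nonempty
  disjoint : Disjoint C D
  notMem_left : v ∉ C
  notMem_right : v ∉ D
  mem_union_or_eq : ∀ x, x ∈ C ∪ D ∨ x = v
  not_adj : ∀ e, ¬ ∃ u ∈ C, ∃ w ∈ D, G.ends e = s(u, w)

variable {G : Multigraph} {v : G.V} {A C D : Finset G.V}

theorem IsCutVertex.exists_isSeparation (h : G.IsCutVertex v) : ∃ C D, G.IsSeparation v C D := by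
  obtain ⟨C, D, hC, hD, hCD, hvC, hvD, hcover, hno⟩ := h
  exact ⟨C, D, hC, hD, hCD, hvC, hvD, hcover, hno⟩

namespace IsSeparation

theorem symm (h : G.IsSeparation v C D) : G.IsSeparation v D C where
  left_nonempty := h.right_nonempty
  right_nonempty := h.left_nonempty
  disjoint := h.disjoint.symm
  notMem_left := h.notMem_right
  notMem_right := h.notMem_left
  mem_union_or_eq := Finset.union_comm C D ▸ h.mem_union_or_eq
  not_adj e := fun ⟨u, hu, w, hw, he⟩ => h.not_adj e ⟨w, hw, u, hu, he.trans Sym2.eq_swap⟩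

theorem inter_union_inter (h : G.IsSeparation v C D) (hv : v ∉ A) : A ∩ C ∪ A ∩ D = A := by
  rw [← Finset.inter_union_distrib_left, Finset.inter_eq_left]
  exact fun x hx => (h.mem_union_or_eq x).resolve_right fun hxv => hv (hxv ▸ hx)

theorem card_cut (h : G.IsSeparation v C D) (hv : v ∉ A) :
    (G.cut A).card = (G.cut (A ∩ C)).card + (G.cut (A ∩ D)).card := by
  rw [← card_cut_union, h.inter_union_inter hv]
  · exact h.disjoint.mono Finset.inter_subset_right Finset.inter_subset_right
  · rintro e ⟨u, hu, w, hw, he⟩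
    exact h.not_adj e ⟨u, Finset.mem_of_mem_inter_right hu, w, Finset.mem_of_mem_inter_right hw, he⟩

theorem exists_edge_left (h : G.IsSeparation v C D) (hG : G.EdgeConnGe 1) :
    ∃ e, ∃ c ∈ C, G.ends e = s(c, v) := by
  obtain ⟨e, he⟩ := Finset.card_pos.1 (hG.le_card_cut_of_notMem h.left_nonempty h.notMem_left)
  obtain ⟨c, hc, w, hw, hcw⟩ := exists_ends_eq_of_mem_cut he
  have hwD : w ∉ D := fun hwD => h.not_adj e ⟨c, hc, w, hwD, hcw⟩
  obtain rfl : w = v := (h.mem_union_or_eq w).resolve_left (by simp [hw, hwD])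
  exact ⟨e, c, hc, hcw⟩

theorem two_mul_le_card_cut {k : ℕ} (h : G.IsSeparation v C D) (hG : G.EdgeConnGe k) (hv : v ∉ A)
    (hAC : (A ∩ C).Nonempty) (hAD : (A ∩ D).Nonempty) : 2 * k ≤ (G.cut A).card := by
  have hC := hG.le_card_cut_of_notMem hAC (mt Finset.mem_of_mem_inter_left hv)
  have hD := hG.le_card_cut_of_notMem hAD (mt Finset.mem_of_mem_inter_left hv)
  rw [h.card_cut hv]
  lia

theorem card_inter_left_eq_one (h : G.IsSeparation v C D) (hG : G.Internally4EC) (hv : v ∉ A)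
    (hAC : (A ∩ C).Nonempty) (hcut : (G.cut (A ∩ C)).card = 3) : (A ∩ C).card = 1 := by
  obtain ⟨d, hd⟩ := h.right_nonempty
  refine hG.card_eq_one hAC (x := v) (y := d) ?_ (mt Finset.mem_of_mem_inter_left hv) ?_ hcut
  · exact fun hvd => h.notMem_right (hvd ▸ hd)
  · exact fun hdA => Finset.disjoint_right.1 h.disjoint hd (Finset.mem_of_mem_inter_right hdA)

theorem card_eq_two (h : G.IsSeparation v C D) (hG : G.Internally4EC) (hv : v ∉ A)
    (hAC : (A ∩ C).Nonempty) (hAD : (A ∩ D).Nonempty) (hcut : (G.cut A).card = 6) :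
    A.card = 2 := by
  have hC := hG.1.le_card_cut_of_notMem hAC (mt Finset.mem_of_mem_inter_left hv)
  have hD := hG.1.le_card_cut_of_notMem hAD (mt Finset.mem_of_mem_inter_left hv)
  rw [h.card_cut hv] at hcut
  have hAC1 : (A ∩ C).card = 1 := h.card_inter_left_eq_one hG hv hAC (by lia)
  have hAD1 : (A ∩ D).card = 1 := h.symm.card_inter_left_eq_one hG hv hAD (by lia)
  rw [← h.inter_union_inter hv, Finset.card_union_of_disjoint, hAC1, hAD1]
  exact h.disjoint.mono Finset.inter_subset_right Finset.inter_subset_right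

end IsSeparation

end Separations

section SplittingOff

/-- Splitting off the edges `e` and `f`, meant to be `cv` and `dv` for some vertex `v`: both are
deleted and a new edge joins `c` and `d`. The new edge is `none`; the surviving ones are wrapped
in `some`. -/
abbrev splitOff (G : Multigraph) (e f : G.E) {c d : G.V} (hcd : c ≠ d) : Multigraph where
  V := G.V
  E := Option ↥({e, f}ᶜ : Finset G.E)
  ends
    | none => s(c, d)
    | some x => G.ends x
  noLoop
    | none => Sym2.mk_isDiag_iff.not.2 hcd
    | some x => G.noLoop x

variable {G : Multigraph} {e f : G.E} {c d v : G.V} {A C D : Finset G.V}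

theorem edge_ne_of_ends_eq (hcd : c ≠ d) (he : G.ends e = s(c, v)) (hf : G.ends f = s(d, v)) :
    e ≠ f := by
  rintro rfl
  exact hcd (Sym2.congr_left.1 (he.symm.trans hf))

theorem card_edges_splitOff (hcd : c ≠ d) (hef : e ≠ f) :
    Fintype.card (G.splitOff e f hcd).E + 1 = Fintype.card G.E := by
  have hpair : 2 ≤ Fintype.card G.E := Finset.card_pair hef ▸ Finset.card_le_univ _
  rw [Fintype.card_option, Fintype.card_coe, Finset.card_compl, Finset.card_pair hef]
  lia

theorem splitOff_immerses (hcd : c ≠ d) (he : G.ends e = s(c, v)) (hf : G.ends f = s(d, v)) :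
    Immerses (G.splitOff e f hcd) G := by
  refine immerses_of_walks id Function.injective_id
    (fun | none => [e, f] | some x => [x.1]) ?_ ?_
  · have hpair : ∀ x : ↥({e, f}ᶜ : Finset G.E), x.1 ∉ [e, f] := fun x => by
      simpa using x.2
    rintro (_ | x) (_ | y) hxy
    · exact absurd rfl hxy
    · exact List.disjoint_singleton.2 (hpair y)
    · exact List.singleton_disjoint.2 (hpair x)
    · refine List.singleton_disjoint.2 (mt List.mem_singleton.1 fun h => hxy ?_)
      exact congrArg some (Subtype.ext h)
  · rintro (_ | x)
    · exact ⟨c, d, rfl, .cons e he (.cons f (hf.trans Sym2.eq_swap) (.nil d)),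
        List.Subset.refl _⟩
    · obtain ⟨a, b, hab⟩ := G.exists_ends_eq x
      exact ⟨a, b, hab, .cons x.1 hab (.nil b), List.Subset.refl _⟩

theorem card_cut_splitOff (hcd : c ≠ d) (he : G.ends e = s(c, v)) (hf : G.ends f = s(d, v))
    (hv : v ∉ A) : ((G.splitOff e f hcd).cut A).card + (if c ∈ A ∧ d ∈ A then 2 else 0) =
      (G.cut A).card := by
  have hnew : none ∈ (G.splitOff e f hcd).cut A ↔ (c ∈ A ↔ d ∉ A) :=
    mem_cut_iff (G := G.splitOff e f hcd) rfl
  have hold (x) : some x ∈ (G.splitOff e f hcd).cut A ↔ x.1 ∈ G.cut A := by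
    obtain ⟨a, b, hab⟩ := G.exists_ends_eq x
    exact (mem_cut_iff (G := G.splitOff e f hcd) (e := some x) hab).trans (mem_cut_iff hab).symm
  have heA : e ∈ G.cut A ↔ c ∈ A := by rw [mem_cut_iff he, iff_true_right hv]
  have hfA : f ∈ G.cut A ↔ d ∈ A := by rw [mem_cut_iff hf, iff_true_right hv]
  have hcard {α : Type} [Fintype α] [DecidableEq α] (S : Finset α) :
      S.card = ∑ x, if x ∈ S then 1 else 0 := by
    rw [← Finset.card_filter, Finset.filter_univ_mem]
  rw [hcard (G.cut A), ← Finset.sum_add_sum_compl {e, f},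
    Finset.sum_pair (edge_ne_of_ends_eq hcd he hf), ← Finset.sum_coe_sort ({e, f}ᶜ), hcard,
    Fintype.sum_option]
  simp only [hnew, hold, heA, hfA]
  grind

theorem IsSeparation.weakly5EC_splitOff (h : G.IsSeparation v C D) (hG : G.Weakly5EC)
    (hcd : c ≠ d) (hc : c ∈ C) (hd : d ∈ D) (he : G.ends e = s(c, v)) (hf : G.ends f = s(d, v)) :
    (G.splitOff e f hcd).Weakly5EC := by
  refine weakly5EC_of_forall_notMem v fun A hA hv => ?_
  have hcard := card_cut_splitOff hcd he hf hv
  by_cases hcdA : c ∈ A ∧ d ∈ A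
  · rw [if_pos hcdA] at hcard
    have hAC : (A ∩ C).Nonempty := ⟨c, Finset.mem_inter.2 ⟨hcdA.1, hc⟩⟩
    have hAD : (A ∩ D).Nonempty := ⟨d, Finset.mem_inter.2 ⟨hcdA.2, hd⟩⟩
    have h6 : 2 * 3 ≤ (G.cut A).card := h.two_mul_le_card_cut hG.1.1 hv hAC hAD
    exact ⟨by lia, by lia, fun h4 => .inl (h.card_eq_two hG.1 hv hAC hAD (by lia)).le⟩
  · rw [if_neg hcdA, add_zero] at hcard
    have hA' : A ≠ Finset.univ := fun hA' => hv (hA' ▸ Finset.mem_univ v)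
    rw [hcard]
    exact ⟨hG.1.1 A hA hA', hG.1.2 A hA hA', hG.2 A hA hA'⟩

theorem IsSeparation.two_mul_le_deg_splitOff {k : ℕ} (h : G.IsSeparation v C D)
    (hG : G.EdgeConnGe k) (hcd : c ≠ d) (hc : c ∈ C) (hd : d ∈ D) (he : G.ends e = s(c, v))
    (hf : G.ends f = s(d, v)) : 2 * k ≤ (G.splitOff e f hcd).deg v + 2 := by
  have hv : v ∉ ({v}ᶜ : Finset G.V) := Finset.notMem_compl.2 (Finset.mem_singleton_self v)
  have hmem : ∀ x ≠ v, x ∈ ({v}ᶜ : Finset G.V) := by simp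
  have hcv : c ∈ ({v}ᶜ : Finset G.V) := hmem c fun hcv => h.notMem_left (hcv ▸ hc)
  have hdv : d ∈ ({v}ᶜ : Finset G.V) := hmem d fun hdv => h.notMem_right (hdv ▸ hd)
  have hcard := card_cut_splitOff hcd he hf hv
  rw [if_pos ⟨hcv, hdv⟩] at hcard
  have hdeg : ((G.splitOff e f hcd).cut {v}ᶜ).card = (G.splitOff e f hcd).deg v := by
    rw [cut_compl, card_cut_singleton]
  rw [← hdeg, hcard]
  exact h.two_mul_le_card_cut hG hv ⟨c, Finset.mem_inter.2 ⟨hcv, hc⟩⟩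
    ⟨d, Finset.mem_inter.2 ⟨hdv, hd⟩⟩

end SplittingOff

end Multigraph

open Multigraph in
theorem minimal_C5_twoConnected_general (H G : Multigraph) (h5 : G.Weakly5EC)
    (hno : ¬ Immerses H G)
    (hmin : ∀ G' : Multigraph, Fintype.card G'.V = Fintype.card G.V → G'.Weakly5EC →
      ¬ Immerses H G' → ¬ G'.IsRegular 3 → Fintype.card G.E ≤ Fintype.card G'.E)
    (hn : 3 ≤ Fintype.card G.V) : G.TwoConnected := by
  have hconn : G.EdgeConnGe 1 := h5.1.1.mono (by lia)
  refine ⟨hconn.connected, hn, fun v hv => ?_⟩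
  obtain ⟨C, D, hsep⟩ := hv.exists_isSeparation
  obtain ⟨e, c, hc, he⟩ := hsep.exists_edge_left hconn
  obtain ⟨f, d, hd, hf⟩ := hsep.symm.exists_edge_left hconn
  have hcd : c ≠ d := Finset.disjoint_iff_ne.1 hsep.disjoint c hc d hd
  have hdeg := hsep.two_mul_le_deg_splitOff h5.1.1 hcd hc hd he hf
  have hreg : ¬ (G.splitOff e f hcd).IsRegular 3 := fun hreg => by
    rw [hreg v] at hdeg
    lia
  have hle := hmin (G.splitOff e f hcd) rfl (hsep.weakly5EC_splitOff h5 hcd hc hd he hf)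
    (fun hH => hno (hH.trans (splitOff_immerses hcd he hf))) hreg
  have hcard := card_edges_splitOff hcd (edge_ne_of_ends_eq hcd he hf)
  lia

open Multigraph in
/-- Every weakly 5-edge-connected `K_{3,3}`-immersion-free graph `G` with at
least 6 vertices that is not 3-regular planar and has the fewest edges among
all weakly 5-edge-connected non-3-regular-planar `K_{3,3}`-immersion-free
graphs on `|V(G)|` vertices is 2-connected. -/
theorem minimal_C5_twoConnected (G : Multigraph)
    (h5 : G.Weakly5EC) (hno : ¬ Immerses K33 G)
    (hnrp : ¬ (G.IsRegular 3 ∧ G.Planar))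
    (hmin : ∀ G' : Multigraph, Fintype.card G'.V = Fintype.card G.V →
      G'.Weakly5EC → ¬ Immerses K33 G' → ¬ (G'.IsRegular 3 ∧ G'.Planar) →
      Fintype.card G.E ≤ Fintype.card G'.E)
    (hn : 6 ≤ Fintype.card G.V) :
    G.TwoConnected := by
  exact minimal_C5_twoConnected_general K33 G h5 hno
    (fun G' hV h5' hno' hreg => hmin G' hV h5' hno' fun h => hreg h.1) (by lia)
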